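/- arXiv:2502.09091 — 2 statements merged into one kernel-verified Lean document; each statement's English description precedes it below -/
import Mathlib

section
/- Let m be an integer, a, b complex numbers, and σ₀ > 0, and set φ(s) = (s−1)^m e^{as+b}. If φ(s) → 1 as s → ∞ within the sector Ω = {s ∈ ℂ : Re s > σ₀ and |Im s| ≤ Re s}, then m = 0, a = 0, and e^b = 1; in particular φ ≡ 1. -/
open Complex Filter

/-- If `φ(s) = (s−1)^m e^{as+b}` tends to `1` as `s → ∞` inside the sector
`Ω = {s : Re s > σ₀, |Im s| ≤ Re s}`, then `m = 0`, `a = 0` and `e^b = 1`;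
in particular `φ ≡ 1`. -/
theorem phi_tendsto_one_in_sector
    (m : ℤ) (a b : ℂ) (σ₀ : ℝ) (hσ₀ : 0 < σ₀)
    (φ : ℂ → ℂ) (hφ : ∀ s : ℂ, φ s = (s - 1) ^ m * Complex.exp (a * s + b))
    (hlim : ∀ ε : ℝ, 0 < ε → ∃ R : ℝ, 0 < R ∧ ∀ s : ℂ,
      σ₀ < s.re → |s.im| ≤ s.re → R < ‖s‖ → ‖φ s - 1‖ < ε) :
    m = 0 ∧ a = 0 ∧ Complex.exp b = 1 ∧ ∀ s : ℂ, φ s = 1 := by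
  have key : ∀ w : ℂ, Tendsto (fun x : ℝ => φ (1 + x + w)) atTop (nhds 1) := by
    intro w
    rw [Metric.tendsto_atTop]
    intro ε hε
    obtain ⟨R, hR, h⟩ := hlim ε hε
    refine ⟨R + σ₀ + |w.im| + |w.re|, fun x hx => ?_⟩
    rw [dist_eq_norm]
    have h1 := neg_abs_le w.re
    have h2 := abs_nonneg w.im
    have hre : (1 + (x : ℂ) + w).re = 1 + x + w.re := by simp
    have him : (1 + (x : ℂ) + w).im = w.im := by simp
    apply h
    · rw [hre]; linarith
    · rw [hre, him]; linarith
    · have h3 := Complex.re_le_norm (1 + (x : ℂ) + w)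
      rw [hre] at h3
      linarith
  have hx0 : ∀ᶠ x : ℝ in atTop, (x : ℂ) ≠ 0 := by
    filter_upwards [eventually_gt_atTop 0] with x hx
    exact_mod_cast hx.ne'
  have hinv : Tendsto (fun x : ℝ => ((x : ℂ))⁻¹) atTop (nhds 0) := by
    have := (Complex.continuous_ofReal.tendsto 0).comp tendsto_inv_atTop_zero
    simpa [Function.comp_def] using this
  have hexp : ∀ w : ℂ, Complex.exp (a * w) = 1 := by
    intro w
    have h1 : Tendsto (fun x : ℝ => φ (1 + x + w) / φ (1 + x + 0)) atTop (nhds (1 / 1)) :=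
      (key w).div (key 0) one_ne_zero
    have h2 : Tendsto (fun x : ℝ => (1 + w * (x : ℂ)⁻¹) ^ m * Complex.exp (a * w)) atTop
        (nhds ((1 + w * 0) ^ m * Complex.exp (a * w))) := by
      refine Tendsto.mul_const _ (Tendsto.zpow₀ ?_ m (Or.inl (by simp)))
      exact (hinv.const_mul w).const_add 1
    have h3 := tendsto_nhds_unique (h1.congr' ?_) h2
    · simpa using h3.symm
    · filter_upwards [hx0] with x hx
      rw [hφ, hφ]
      have e1 : (1 + (x : ℂ) + w - 1) = x * (1 + w * (x : ℂ)⁻¹) := by field_simp; ring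
      have e2 : (1 + (x : ℂ) + 0 - 1) = x := by ring
      have e3 : a * (1 + x + w) + b = (a * (1 + x + 0) + b) + a * w := by ring
      rw [e1, e2, e3, mul_zpow, Complex.exp_add (a * (1 + x + 0) + b)]
      have := zpow_ne_zero m hx
      have := Complex.exp_ne_zero (a * (1 + x + 0) + b)
      field_simp
  have ha : a = 0 := by
    by_contra ha
    have h := hexp (a⁻¹)
    rw [mul_inv_cancel₀ ha] at h
    have h' : Real.exp 1 = 1 := by
      apply Complex.ofReal_injective
      rw [Complex.ofReal_exp, Complex.ofReal_one, h]
    have := Real.exp_eq_one_iff 1 |>.1 h'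
    norm_num at this
  subst ha
  have hm : m = 0 := by
    have hk := key 0
    have hk2 := hk.comp (tendsto_id.const_mul_atTop (zero_lt_two (α := ℝ)))
    have h1 := hk2.div hk one_ne_zero
    have h3 := tendsto_nhds_unique (h1.congr' (f₂ := fun _ => (2 : ℂ) ^ m) ?_) tendsto_const_nhds
    · have h4 : (2 : ℝ) ^ m = 1 := by
        have : (2 : ℂ) ^ m = 1 := by simpa using h3.symm
        apply Complex.ofReal_injective
        rw [Complex.ofReal_zpow, Complex.ofReal_one, Complex.ofReal_ofNat, this]
      exact (zpow_eq_one_iff_right₀ (by norm_num) (by norm_num)).1 h4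
    · filter_upwards [hx0] with x hx
      simp only [Function.comp, id, Pi.div_apply]
      rw [hφ, hφ]
      have := zpow_ne_zero m hx
      have := Complex.exp_ne_zero b
      simp [mul_zpow]
      field_simp
  subst hm
  have hb : Complex.exp b = 1 := by
    have hk := key 0
    simp only [hφ, zpow_zero, zero_mul, zero_add, one_mul] at hk
    exact tendsto_nhds_unique tendsto_const_nhds hk
  exact ⟨rfl, rfl, hb, fun s => by rw [hφ]; simp [hb]⟩
end

section
/- Let m be an integer, b ∈ ℂ, and a ∈ ℂ with a ≠ 0, and set φ(s) = (s−1)^m e^{as+b}. If θ ∈ [0, 2π) is a 1-value limiting direction of φ, i.e. there exists an unbounded sequence (s_n) with arg s_n → θ and φ(s_n) → 1, then Re(a e^{iθ}) = 0. In particular, φ has at most two 1-value limiting directions. -/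
open Complex Filter

/-- `θ ∈ [0, 2π)` is a `c`-value limiting direction of `f`: there is a sequence
`(sₙ)` with `|sₙ| → ∞`, `arg sₙ → θ` and `f sₙ → c`. -/
def IsValueLimitingDirection (f : ℂ → ℂ) (c : ℂ) (θ : ℝ) : Prop :=
  ∃ s : ℕ → ℂ, Filter.Tendsto (fun n => ‖s n‖) Filter.atTop Filter.atTop ∧
    Filter.Tendsto (fun n => s n / (‖s n‖ : ℂ)) Filter.atTop
      (nhds (Complex.exp (θ * Complex.I))) ∧
    Filter.Tendsto (fun n => f (s n)) Filter.atTop (nhds c)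

lemma phi_aux1 (m : ℤ) (a b : ℂ) (φ : ℂ → ℂ)
    (hφ : ∀ s : ℂ, φ s = (s - 1) ^ m * Complex.exp (a * s + b)) (θ : ℝ)
    (h : IsValueLimitingDirection φ 1 θ) : (a * Complex.exp (θ * Complex.I)).re = 0 := by
  obtain ⟨s, h1, h2, h3⟩ := h
  have hs1 : Tendsto (fun n => ‖s n - 1‖) atTop atTop := by
    refine tendsto_atTop_mono (f := fun n => ‖s n‖ - 1) (fun n => ?_)
      (tendsto_atTop_add_const_right _ (-1) h1)
    have := norm_sub_norm_le (s n) 1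
    simpa using this
  have hinv : Tendsto (fun n => ‖s n‖⁻¹) atTop (nhds 0) := tendsto_inv_atTop_zero.comp h1
  have hO : (fun n => ‖s n - 1‖) =O[atTop] (fun n => ‖s n‖) := by
    refine Asymptotics.IsBigO.of_bound 2 ?_
    filter_upwards [h1.eventually_ge_atTop 1] with n hn
    have := norm_sub_le (s n) 1
    simp only [norm_norm, norm_one] at *
    linarith
  have hlog : Tendsto (fun n => Real.log ‖s n - 1‖ / ‖s n‖) atTop (nhds 0) :=
    ((Real.isLittleO_log_id_atTop.comp_tendsto hs1).trans_isBigO hO).tendsto_div_nhds_zero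
  have hl : Tendsto (fun n => Real.log ‖φ (s n)‖) atTop (nhds 0) := by
    have := (Real.continuousAt_log (x := ‖(1 : ℂ)‖) (by simp)).tendsto.comp h3.norm
    simpa [Function.comp_def] using this
  have hA : Tendsto (fun n => Real.log ‖φ (s n)‖ * ‖s n‖⁻¹
      - m * (Real.log ‖s n - 1‖ / ‖s n‖) - b.re * ‖s n‖⁻¹) atTop (nhds 0) := by
    have := ((hl.mul hinv).sub (hlog.const_mul (m : ℝ))).sub (hinv.const_mul b.re)
    simpa using this
  have hB : Tendsto (fun n => (a * (s n / (‖s n‖ : ℂ))).re) atTop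
      (nhds (a * Complex.exp (θ * Complex.I)).re) :=
    (Complex.continuous_re.tendsto _).comp (h2.const_mul a)
  refine tendsto_nhds_unique hB (hA.congr' ?_)
  filter_upwards [h1.eventually_gt_atTop 0, hs1.eventually_gt_atTop 0] with n hn hn1
  have e : (a * (s n / (‖s n‖ : ℂ))).re = (a * s n).re / ‖s n‖ := by
    rw [← mul_div_assoc, Complex.div_ofReal_re]
  rw [e, hφ, norm_mul, norm_zpow, Complex.norm_exp,
    Real.log_mul (zpow_pos hn1 m).ne' (Real.exp_pos _).ne', Real.log_zpow, Real.log_exp,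
    Complex.add_re]
  field_simp
  ring

lemma phi_aux2 (a : ℂ) (ha : a ≠ 0) :
    {θ ∈ Set.Ico 0 (2 * Real.pi) | (a * Complex.exp ((θ : ℝ) * Complex.I)).re = 0}.encard
      ≤ 2 := by
  have hinj : Set.InjOn (fun θ : ℝ => Complex.exp (θ * Complex.I))
      {θ ∈ Set.Ico 0 (2 * Real.pi) | (a * Complex.exp ((θ : ℝ) * Complex.I)).re = 0} := by
    rintro x ⟨⟨hx0, hx1⟩, -⟩ y ⟨⟨hy0, hy1⟩, -⟩ hxy
    obtain ⟨n, hn⟩ := Complex.exp_eq_exp_iff_exists_int.1 hxy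
    have hn' : x = y + n * (2 * Real.pi) := by
      have := congrArg Complex.im hn
      simpa using this
    have hp := Real.pi_pos
    have h1 : (n : ℝ) < 1 := by
      by_contra! hc
      nlinarith
    have h2 : (-1 : ℝ) < n := by
      by_contra! hc
      nlinarith
    have h3 : n = 0 := by
      have h1' : n < 1 := by exact_mod_cast h1
      have h2' : -1 < n := by exact_mod_cast h2
      omega
    simpa [h3] using hn'
  rw [← hinj.encard_image]
  refine le_trans (Set.encard_le_encard (t := {Complex.I * ‖a‖ / a, -(Complex.I * ‖a‖ / a)}) ?_)
    ((Set.encard_insert_le _ _).trans (by rw [Set.encard_singleton]; norm_num))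
  rintro _ ⟨x, ⟨-, hx⟩, rfl⟩
  have hnorm : ‖a * Complex.exp ((x : ℝ) * Complex.I)‖ = ‖a‖ := by
    rw [norm_mul, Complex.norm_exp_ofReal_mul_I, mul_one]
  set w := a * Complex.exp ((x : ℝ) * Complex.I) with hw
  have hwi : w = Complex.I * w.im := by
    apply Complex.ext <;> simp [hx]
  have habs : |w.im| = ‖a‖ := by
    rw [← hnorm, hwi]; simp
  have hz : Complex.exp ((x : ℝ) * Complex.I) = w / a := by
    rw [hw]; field_simp
  simp only [Set.mem_insert_iff, Set.mem_singleton_iff]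
  rw [hz]
  rcases abs_choice w.im with h | h
  · left
    rw [← habs, h, ← hwi]
  · right
    rw [← habs, h, ← neg_div]
    push_cast
    rw [mul_neg, neg_neg, ← hwi]

/-- If `φ(s) = (s−1)^m e^{as+b}` with `a ≠ 0` and `θ ∈ [0, 2π)` is a `1`-value
limiting direction of `φ`, then `Re (a e^{iθ}) = 0`. In particular, `φ` has at most
two `1`-value limiting directions in `[0, 2π)`. -/
theorem one_value_limiting_directions_of_phi
    (m : ℤ) (a b : ℂ) (ha : a ≠ 0)
    (φ : ℂ → ℂ) (hφ : ∀ s : ℂ, φ s = (s - 1) ^ m * Complex.exp (a * s + b)) :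
    (∀ θ : ℝ, θ ∈ Set.Ico 0 (2 * Real.pi) →
      IsValueLimitingDirection φ 1 θ → (a * Complex.exp (θ * Complex.I)).re = 0) ∧
    ({θ ∈ Set.Ico 0 (2 * Real.pi) | IsValueLimitingDirection φ 1 θ}.encard ≤ 2) := by
  refine ⟨fun θ _ h => phi_aux1 m a b φ hφ θ h,
    le_trans (Set.encard_le_encard ?_) (phi_aux2 a ha)⟩
  rintro θ ⟨h1, h2⟩
  exact ⟨h1, phi_aux1 m a b φ hφ θ h2⟩
end
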